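/- arXiv:1506.07148 — 2 statements merged into one kernel-verified Lean document; each statement's English description precedes it below -/
import Mathlib

section
/- For every integer i ≥ 1, there exists a finite solvable group G_i such that 1 is the only prime power among the degrees of the irreducible complex characters of G_i, the Fitting height of G_i equals i + 1, G_i has a unique minimal normal subgroup, and G_i has a Sylow tower. -/
/-!
The groups are built by induction on the Fitting height, starting with a cyclic group of prime order.
Given a group `Y` with a unique minimal normal subgroup `N`, choose a prime `q` not dividing `|Y|` and
a prime `r ≡ 1` modulo `q` not dividing `|Y| q`. By Maschke's theorem some simple module `A` of `Y`
over `ZMod r` is moved by `N`; its kernel is a normal subgroup not containing `N`, so it is trivial.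
Let a cyclic group `C` of order `q` act on `A` by scalars. Since `|Y|` and `q` are coprime, the action
of `Y × C` on `A` is still faithful, and it is irreducible (`exists_action`). The next group is
`A ⋊ (Y × C)`.

The point is that this extension creates no new character degree that is a prime power
(`isCDG_semidirectProduct`). A degree lying over a character `χ` of `A` is divisible by the orbit
length of `χ` under `Y × C` (`index_stabilizer_dvd_finrank`). If the degree is a prime power, then
the stabilizer of `χ` has prime power index in `Y × C`; as `|Y|` and `|C|` are coprime, it contains
`Y` or `C` (`exists_normal_le_of_isPrimePow_index`). By faithfulness and irreducibility no nontrivial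
character is fixed by a nontrivial normal subgroup (`eq_one_of_fixed`), so `χ = 1` and the degree is
one of `Y × C`, hence one of `Y`, as `C` is abelian.

Since `A` is self-centralizing and irreducible, it lies in every nontrivial normal subgroup
(`ker_rightHom_le_of_normal`). It is therefore the unique minimal normal subgroup. It is also the
largest nilpotent normal subgroup: the center of a nontrivial nilpotent normal subgroup contains `A`,
so that the subgroup centralizes `A`. Hence the Fitting height exceeds that of `Y × C` by one, and
`Y × C` has the Fitting height of `Y`. The Sylow tower of `Y` lifts because `C` and `A` are Sylow
subgroups of `Y × C` and `A ⋊ (Y × C)`.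
-/

/-- The set of degrees of the irreducible complex characters of `G`. -/
def charDegrees (G : Type) [Group G] : Set ℕ :=
  {d | ∃ V : FDRep ℂ G, CategoryTheory.Simple V ∧ Module.finrank ℂ V = d}

/-- `G` is a *composite degree group* (CDG): `1` is the only prime power among the degrees of
the irreducible complex characters of `G`. -/
def IsCDG (G : Type) [Group G] : Prop :=
  ∀ d ∈ charDegrees G, IsPrimePow d → d = 1

/-- The quotient `B/A` (for normal subgroups `A ≤ B` of `G`) is a nilpotent group. -/
def IsNilpotentQuot {G : Type*} [Group G] (A B : Subgroup G) [A.Normal] : Prop :=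
  Group.IsNilpotent (↥(B.map (QuotientGroup.mk' A)))

/-- `F` is a normal series `⊥ = F 0 ≤ F 1 ≤ ⋯ ≤ F n = ⊤` of normal subgroups of `G`
with every quotient `F (i+1) / F i` nilpotent. -/
def IsFittingSeries {G : Type*} [Group G] (F : ℕ → Subgroup G) (n : ℕ) : Prop :=
  F 0 = ⊥ ∧ F n = ⊤ ∧ (∀ i, (F i).Normal) ∧ (∀ i, i < n → F i ≤ F (i + 1)) ∧
    ∀ i, i < n → ∀ hi : (F i).Normal, @IsNilpotentQuot G _ (F i) (F (i + 1)) hi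

/-- The Fitting height of `G` equals `n`: `n` is the length of a shortest normal series of `G`
with nilpotent quotients. -/
def FittingHeightIs (G : Type*) [Group G] (n : ℕ) : Prop :=
  (∃ F : ℕ → Subgroup G, IsFittingSeries F n) ∧
    ∀ m : ℕ, (∃ F : ℕ → Subgroup G, IsFittingSeries F m) → n ≤ m

/-- `N` is a minimal normal subgroup of `G`: it is nontrivial, normal, and contains no smaller
nontrivial normal subgroup of `G`. -/
def IsMinimalNormal {G : Type*} [Group G] (N : Subgroup G) : Prop :=
  N.Normal ∧ N ≠ ⊥ ∧ ∀ M : Subgroup G, M.Normal → M ≤ N → M = ⊥ ∨ M = N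

/-- `N` is the unique minimal normal subgroup of `G`. -/
def IsUniqueMinimalNormal (G : Type*) [Group G] (N : Subgroup G) : Prop :=
  IsMinimalNormal N ∧ ∀ M : Subgroup G, IsMinimalNormal M → M = N

/-- One step of a Sylow tower: the quotient `B/A` is isomorphic to a Sylow subgroup
of `G/A`. -/
def IsSylowQuotStep {G : Type*} [Group G] (A B : Subgroup G) [A.Normal] : Prop :=
  ∃ (p : ℕ) (_ : Fact p.Prime) (S : Sylow p (G ⧸ A)),
    Nonempty ((↥(B.map (QuotientGroup.mk' A))) ≃* ↥(S : Subgroup (G ⧸ A)))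

/-- `G` has a Sylow tower: there is a normal series `⊥ = P 0 ≤ ⋯ ≤ P k = ⊤` of normal
subgroups of `G` in which each quotient `P (j+1) / P j` is isomorphic to a Sylow subgroup
of `G / P j`. -/
def HasSylowTower (G : Type*) [Group G] : Prop :=
  ∃ (k : ℕ) (P : ℕ → Subgroup G),
    P 0 = ⊥ ∧ P k = ⊤ ∧ (∀ j, (P j).Normal) ∧ (∀ j, j < k → P j ≤ P (j + 1)) ∧
      ∀ j, j < k → ∀ hj : (P j).Normal, @IsSylowQuotStep G _ (P j) (P (j + 1)) hj

/-! ### Fitting series along surjections -/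

lemma isNilpotent_map {X Y : Type*} [Group X] [Group Y] (f : X →* Y) (S : Subgroup X)
    (h : Group.IsNilpotent S) : Group.IsNilpotent (S.map f) :=
  Group.nilpotent_of_surjective (f.subgroupMap S) (f.subgroupMap_surjective S)

lemma isNilpotent_of_map {X Y : Type*} [Group X] [Group Y] (f : X →* Y)
    (hf : Function.Injective f) (S : Subgroup X)
    (h : Group.IsNilpotent (S.map f)) : Group.IsNilpotent S :=
  Group.nilpotent_of_mulEquiv (S.equivMapOfInjective f hf).symm

lemma isNilpotentQuot_map {X Y : Type*} [Group X] [Group Y] (f : X →* Y)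
    (A B : Subgroup X) [A.Normal] [(A.map f).Normal] (h : IsNilpotentQuot A B) :
    IsNilpotentQuot (A.map f) (B.map f) := by
  unfold IsNilpotentQuot at *
  have := isNilpotent_map (QuotientGroup.map A (A.map f) f (Subgroup.le_comap_map f A)) _ h
  rw [Subgroup.map_map] at this ⊢
  exact this

lemma isNilpotentQuot_comap {X Y : Type*} [Group X] [Group Y] (f : X →* Y)
    (hf : Function.Surjective f) (A B : Subgroup Y) [A.Normal] (h : IsNilpotentQuot A B) :
    IsNilpotentQuot (A.comap f) (B.comap f) := by
  unfold IsNilpotentQuot at *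
  refine isNilpotent_of_map (QuotientGroup.map (A.comap f) A f le_rfl) ?_ _ ?_
  · rw [← MonoidHom.ker_eq_bot_iff, eq_bot_iff]
    intro x hx
    induction x using QuotientGroup.induction_on with
    | H x =>
      simpa [MonoidHom.mem_ker, QuotientGroup.eq_one_iff] using hx
  · rw [Subgroup.map_map]
    have : ((QuotientGroup.map (A.comap f) A f le_rfl).comp (QuotientGroup.mk' (A.comap f))) =
        (QuotientGroup.mk' A).comp f := rfl
    rw [this, ← Subgroup.map_map, Subgroup.map_comap_eq_self_of_surjective hf]
    exact h

lemma isNilpotentQuot_bot {X : Type*} [Group X] (A B : Subgroup X) [A.Normal] (hA : A = ⊥) :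
    IsNilpotentQuot A B ↔ Group.IsNilpotent B := by
  subst hA
  constructor
  · intro h
    refine isNilpotent_of_map (QuotientGroup.mk' (⊥ : Subgroup X)) ?_ _ h
    rw [← MonoidHom.ker_eq_bot_iff, QuotientGroup.ker_mk']
  · exact isNilpotent_map _ _

/-- Pushing a Fitting series forward along a surjection that kills its first `s` terms shortens it
by `s`. -/
lemma IsFittingSeries.map {X Y : Type*} [Group X] [Group Y] (f : X →* Y)
    (hf : Function.Surjective f) (s n : ℕ) (F : ℕ → Subgroup X) (hF : IsFittingSeries F (n + s))
    (hs : F s ≤ f.ker) : IsFittingSeries (fun i => (F (i + s)).map f) n := by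
  obtain ⟨-, h1, h2, h3, h4⟩ := hF
  refine ⟨?_, ?_, fun i => (h2 _).map f hf, fun i hi => ?_, fun i hi hn => ?_⟩
  · simpa [Subgroup.map_eq_bot_iff] using hs
  · simp [h1, Subgroup.map_top_of_surjective f hf]
  · beta_reduce
    rw [add_right_comm]
    exact Subgroup.map_mono (h3 _ (by lia))
  · have := h2 (i + s)
    have : ((F (i + s)).map f).Normal := hn
    have := isNilpotentQuot_map f (F (i + s)) (F (i + s + 1)) (h4 _ (by lia) (h2 _))
    rw [add_right_comm] at this
    exact this

/-- The Fitting height grows by one when passing to an extension by a nilpotent kernel containing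
every nilpotent normal subgroup. -/
lemma fittingHeightIs_succ {X Y : Type*} [Group X] [Group Y] (f : X →* Y)
    (hf : Function.Surjective f) (n : ℕ) (hnil : Group.IsNilpotent f.ker) (hne : f.ker ≠ ⊥)
    (hmax : ∀ K : Subgroup X, K.Normal → Group.IsNilpotent K → K ≤ f.ker)
    (h : FittingHeightIs Y n) : FittingHeightIs X (n + 1) := by
  obtain ⟨⟨F, h0, h1, h2, h3, h4⟩, hmin⟩ := h
  constructor
  · refine ⟨fun i => Nat.casesOn i ⊥ fun i => (F i).comap f, rfl, ?_, ?_, ?_, ?_⟩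
    · simp [h1]
    · rintro (_ | i)
      · exact (inferInstance : (⊥ : Subgroup X).Normal)
      · exact (h2 i).comap f
    · rintro (_ | i) hi
      · exact bot_le
      · exact Subgroup.comap_mono (h3 i (by lia))
    · rintro (_ | i) hi hn
      · refine (@isNilpotentQuot_bot _ _ _ _ hn rfl).2 ?_
        change Group.IsNilpotent ((F 0).comap f)
        rwa [h0, MonoidHom.comap_bot]
      · have := h2 i
        exact isNilpotentQuot_comap f hf (F i) (F (i + 1)) (h4 i (by lia) (h2 i))
  · rintro m ⟨F, hF⟩
    rcases m with _ | m
    · exfalso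
      apply hne
      have : (⊥ : Subgroup X) = ⊤ := hF.1.symm.trans hF.2.1
      exact eq_bot_iff.2 (this ▸ le_top)
    · have hk : F 1 ≤ f.ker := by
        refine hmax _ (hF.2.2.1 1) ?_
        exact (@isNilpotentQuot_bot _ _ _ _ (hF.2.2.1 0) hF.1).1 (hF.2.2.2.2 0 (by lia) _)
      have := hmin m ⟨_, hF.map f hf 1 m F hk⟩
      lia

/-- A Fitting series of `Y` of positive length extends to `Y × C` by enlarging every term but the
first by the abelian factor. -/
lemma fittingHeightIs_prod {Y C : Type*} [Group Y] [CommGroup C] (n : ℕ)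
    (h : FittingHeightIs Y (n + 1)) : FittingHeightIs (Y × C) (n + 1) := by
  have hf : Function.Surjective (MonoidHom.fst Y C) := fun y => ⟨(y, 1), rfl⟩
  obtain ⟨⟨F, h0, h1, h2, h3, h4⟩, hmin⟩ := h
  constructor
  · refine ⟨fun i => Nat.casesOn i ⊥ fun i => (F (i + 1)).comap (MonoidHom.fst Y C),
      rfl, ?_, ?_, ?_, ?_⟩
    · simp [h1]
    · rintro (_ | i)
      · exact (inferInstance : (⊥ : Subgroup (Y × C)).Normal)
      · exact (h2 _).comap _
    · rintro (_ | i) hi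
      · exact bot_le
      · exact Subgroup.comap_mono (h3 _ (by lia))
    · rintro (_ | i) hi hn
      · refine (@isNilpotentQuot_bot _ _ _ _ hn rfl).2 ?_
        have h5 : Group.IsNilpotent (F 1) :=
          (@isNilpotentQuot_bot _ _ _ _ (h2 0) h0).1 (h4 0 (by lia) _)
        have h6 : Group.IsNilpotent ((F 1).prod (⊤ : Subgroup C)) :=
          Group.nilpotent_of_mulEquiv ((F 1).prodEquiv ⊤).symm
        rwa [Subgroup.prod_top] at h6
      · have := h2 (i + 1)
        exact isNilpotentQuot_comap _ hf (F (i + 1)) (F (i + 1 + 1)) (h4 _ (by lia) (h2 _))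
  · rintro m ⟨F, hF⟩
    exact hmin m ⟨_, hF.map (MonoidHom.fst Y C) hf 0 m F (hF.1.le.trans bot_le)⟩

/-! ### Sylow towers -/

lemma isSylowQuotStep_comap {X Y : Type*} [Group X] [Group Y] (f : X →* Y)
    (hf : Function.Surjective f) (A B : Subgroup Y) [A.Normal] (h : IsSylowQuotStep A B) :
    IsSylowQuotStep (A.comap f) (B.comap f) := by
  obtain ⟨p, hp, S, ⟨e⟩⟩ := h
  have hq : Function.Bijective (QuotientGroup.map (A.comap f) A f le_rfl) := by
    constructor
    · rw [← MonoidHom.ker_eq_bot_iff, eq_bot_iff]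
      intro x hx
      induction x using QuotientGroup.induction_on with
      | H x =>
        simpa [MonoidHom.mem_ker, QuotientGroup.eq_one_iff] using hx
    · intro y
      induction y using QuotientGroup.induction_on with
      | H y =>
        obtain ⟨x, rfl⟩ := hf y
        exact ⟨QuotientGroup.mk x, rfl⟩
  have hS : (S : Subgroup (Y ⧸ A)) ≤ (QuotientGroup.map (A.comap f) A f le_rfl).range := by
    rw [MonoidHom.range_eq_top.2 hq.2]; exact le_top
  refine ⟨p, hp, S.comapOfInjective _ hq.1 hS, ⟨?_⟩⟩
  have e1 := ((B.comap f).map (QuotientGroup.mk' (A.comap f))).equivMapOfInjective _ hq.1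
  have e2 := (((S.comapOfInjective _ hq.1 hS : Sylow p _) : Subgroup _)).equivMapOfInjective _ hq.1
  have h1 : ((B.comap f).map (QuotientGroup.mk' (A.comap f))).map
      (QuotientGroup.map (A.comap f) A f le_rfl) = B.map (QuotientGroup.mk' A) := by
    rw [Subgroup.map_map]
    have : ((QuotientGroup.map (A.comap f) A f le_rfl).comp (QuotientGroup.mk' (A.comap f))) =
        (QuotientGroup.mk' A).comp f := rfl
    rw [this, ← Subgroup.map_map, Subgroup.map_comap_eq_self_of_surjective hf]
  have h2 : ((S.comapOfInjective _ hq.1 hS : Sylow p _) : Subgroup _).map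
      (QuotientGroup.map (A.comap f) A f le_rfl) = S := by
    rw [Sylow.coe_comapOfInjective, Subgroup.map_comap_eq_self_of_surjective hq.2]
  exact ((e1.trans (MulEquiv.subgroupCongr h1)).trans e).trans
    (e2.trans (MulEquiv.subgroupCongr h2)).symm

/-- A Sylow tower lifts along a surjection whose kernel is a normal Sylow subgroup. -/
lemma hasSylowTower_of_surjective {X Y : Type*} [Group X] [Group Y] [Finite Y] (f : X →* Y)
    (hf : Function.Surjective f) (p : ℕ) (hp : p.Prime) (hk : IsPGroup p f.ker)
    (hY : ¬ p ∣ Nat.card Y) (h : HasSylowTower Y) : HasSylowTower X := by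
  have : Fact p.Prime := ⟨hp⟩
  obtain ⟨k, P, h0, h1, h2, h3, h4⟩ := h
  refine ⟨k + 1, fun i => Nat.casesOn i ⊥ fun i => (P i).comap f, rfl, ?_, ?_, ?_, ?_⟩
  · simp [h1]
  · rintro (_ | i)
    · exact (inferInstance : (⊥ : Subgroup X).Normal)
    · exact (h2 i).comap f
  · rintro (_ | i) hi
    · exact bot_le
    · exact Subgroup.comap_mono (h3 i (by lia))
  · rintro (_ | i) hi hn
    · have hidx : ¬ p ∣ (f.ker.map (QuotientGroup.mk' (⊥ : Subgroup X))).index := by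
        rw [Subgroup.index_map_eq _ (QuotientGroup.mk'_surjective _) (by simp),
          Subgroup.index_ker, MonoidHom.range_eq_top.2 hf, Subgroup.card_top]
        exact hY
      have hP : P 0 = ⊥ := h0
      refine ⟨p, inferInstance, (hk.map (QuotientGroup.mk' (⊥ : Subgroup X))).toSylow hidx, ⟨?_⟩⟩
      refine MulEquiv.subgroupCongr ?_
      change ((P 0).comap f).map _ = f.ker.map _
      rw [hP, MonoidHom.comap_bot]
      rfl
    · have := h2 i
      exact isSylowQuotStep_comap f hf (P i) (P (i + 1)) (h4 i (by lia) (h2 i))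

/-! ### Irreducible representations -/

/-- `ρ` is nonzero and its space has no proper nonzero invariant subspace. -/
def IsIrr {G V : Type*} [Group G] [AddCommGroup V] [Module ℂ V] (ρ : Representation ℂ G V) : Prop :=
  Nontrivial V ∧ ∀ U : Submodule ℂ V, (∀ g, ∀ v ∈ U, ρ g v ∈ U) → U = ⊥ ∨ U = ⊤

/-- Schur's lemma. -/
lemma IsIrr.exists_smul {G V : Type*} [Group G] [AddCommGroup V] [Module ℂ V]
    [FiniteDimensional ℂ V] {ρ : Representation ℂ G V} (h : IsIrr ρ) (f : V →ₗ[ℂ] V)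
    (hf : ∀ g v, f (ρ g v) = ρ g (f v)) : ∃ c : ℂ, ∀ v, f v = c • v := by
  obtain ⟨h1, h2⟩ := h
  obtain ⟨c, hc⟩ := Module.End.exists_eigenvalue f
  refine ⟨c, fun v => ?_⟩
  have := (h2 (Module.End.eigenspace f c) fun g v hv => ?_).resolve_left hc
  · have hv : v ∈ Module.End.eigenspace f c := this ▸ Submodule.mem_top
    exact Module.End.mem_eigenspace_iff.1 hv
  · rw [Module.End.mem_eigenspace_iff] at hv ⊢
    rw [hf, hv, map_smul]

open CategoryTheory in
lemma isIrr_of_simple {G : Type} [Group G] (V : FDRep ℂ G) (hV : Simple V) : IsIrr V.ρ := by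
  constructor
  · by_contra hn
    rw [not_nontrivial_iff_subsingleton] at hn
    apply id_nonzero V
    ext x
    exact Subsingleton.elim (α := V) _ _
  · intro U hU
    let σ : Representation ℂ G U :=
      { toFun := fun g => (V.ρ g).restrict (hU g)
        map_one' := by ext; simp
        map_mul' := fun a b => by ext; simp }
    let f : FDRep.of σ ⟶ V :=
      { hom := FGModuleCat.ofHom U.subtype
        comm := fun g => by ext x; rfl }
    have hf : Function.Injective f.hom := U.injective_subtype
    have : Mono f :=
      (forget (FDRep ℂ G)).mono_of_mono_map ((mono_iff_injective _).2 hf)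
    by_cases h0 : f = 0
    · left
      rw [eq_bot_iff]
      intro v hv
      have : f.hom ⟨v, hv⟩ = (0 : FDRep.of σ ⟶ V).hom ⟨v, hv⟩ := by rw [h0]
      exact this
    · right
      have := (Simple.mono_isIso_iff_nonzero f).2 h0
      have hs : Function.Surjective f.hom := (ConcreteCategory.bijective_of_isIso f).2
      rw [eq_top_iff]
      intro v _
      obtain ⟨u, hu⟩ := hs v
      rw [← hu]
      exact u.2

open CategoryTheory in
lemma simple_of_isIrr {G V : Type} [Group G] [Finite G] [AddCommGroup V] [Module ℂ V]
    [FiniteDimensional ℂ V] {ρ : Representation ℂ G V} (h : IsIrr ρ) : Simple (FDRep.of ρ) := by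
  have := h.1
  rw [FDRep.simple_iff_end_is_rank_one]
  have h1 : 𝟙 (FDRep.of ρ) ≠ 0 := by
    intro h0
    obtain ⟨v, hv⟩ := exists_ne (0 : V)
    apply hv
    have : (𝟙 (FDRep.of ρ) : FDRep.of ρ ⟶ _).hom v = (0 : FDRep.of ρ ⟶ FDRep.of ρ).hom v := by
      rw [h0]
    exact this
  rw [finrank_eq_one_iff_of_nonzero' _ h1]
  intro f
  obtain ⟨c, hc⟩ := h.exists_smul f.hom.hom.hom fun g v => by
    have := f.comm g
    exact ConcreteCategory.congr_hom this v
  refine ⟨c, ?_⟩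
  ext v
  exact (hc v).symm

/-- Being a composite degree group, in terms of unbundled representations. -/
lemma isCDG_iff {G : Type} [Group G] [Finite G] :
    IsCDG G ↔ ∀ (V : Type) [AddCommGroup V] [Module ℂ V] [FiniteDimensional ℂ V]
      (ρ : Representation ℂ G V), IsIrr ρ → ¬ IsPrimePow (Module.finrank ℂ V) := by
  constructor
  · intro h V _ _ _ ρ hρ hp
    have := h (Module.finrank ℂ V) ⟨FDRep.of ρ, simple_of_isIrr hρ, rfl⟩ hp
    exact hp.ne_one this
  · rintro h d ⟨V, hV, rfl⟩ hp
    exact absurd hp (h V V.ρ (isIrr_of_simple V hV))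

/-- If every operator `ρ y` is a scalar multiple of some `ρ (j x)`, then irreducibility passes to the
restriction of `ρ` along `j`. -/
lemma IsIrr.comp {X Y V : Type*} [Group X] [Group Y] [AddCommGroup V] [Module ℂ V]
    {ρ : Representation ℂ Y V} (h : IsIrr ρ) (j : X →* Y)
    (hj : ∀ y, ∃ x, ∃ c : ℂ, ∀ v, ρ y v = c • ρ (j x) v) :
    IsIrr (MonoidHom.comp ρ j : Representation ℂ X V) := by
  refine ⟨h.1, fun U hU => h.2 U fun y v hv => ?_⟩
  obtain ⟨x, c, hc⟩ := hj y
  rw [hc]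
  exact U.smul_mem c (hU x v hv)

/-- The central factor `C` acts by scalars on an irreducible representation of `Y × C`, which
therefore stays irreducible over `Y`. -/
lemma isCDG_prod {Y C : Type} [Group Y] [Finite Y] [CommGroup C] [Finite C] (h : IsCDG Y) :
    IsCDG (Y × C) := by
  rw [isCDG_iff] at h ⊢
  intro V _ _ _ ρ hρ
  refine h V _ (hρ.comp (MonoidHom.inl Y C) ?_)
  rintro ⟨y, c⟩
  obtain ⟨a, ha⟩ := hρ.exists_smul (ρ (1, c)) fun g v => by
    rw [← Module.End.mul_apply, ← Module.End.mul_apply, ← map_mul, ← map_mul]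
    congr 2
    ext
    · simp
    · simp [mul_comm]
  refine ⟨y, a, fun v => ?_⟩
  rw [← ha, ← Module.End.mul_apply, ← map_mul]
  simp

lemma isCDG_of_comm {C : Type} [CommGroup C] [Finite C] : IsCDG C := by
  rw [isCDG_iff]
  intro V _ _ _ ρ hρ hp
  apply hp.ne_one
  have := hρ.1
  obtain ⟨v, hv⟩ := exists_ne (0 : V)
  refine finrank_eq_one v hv fun w => ?_
  have h1 : ∀ g, ∃ c : ℂ, ∀ v, ρ g v = c • v := fun g => hρ.exists_smul (ρ g) fun g' v => by
    rw [← Module.End.mul_apply, ← Module.End.mul_apply, ← map_mul, ← map_mul, mul_comm]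
  have := (hρ.2 (ℂ ∙ v) fun g u hu => by
    obtain ⟨c, hc⟩ := h1 g
    rw [hc]
    exact Submodule.smul_mem _ _ hu).resolve_left (by simpa using hv)
  exact Submodule.mem_span_singleton.1 (this ▸ Submodule.mem_top : w ∈ _)

/-! ### Weights of a normal abelian subgroup -/

/-- The subspace on which the group `A` acts through the linear character `χ`. -/
def wt {A V : Type*} [Group A] [AddCommGroup V] [Module ℂ V] (ρ : Representation ℂ A V)
    (χ : A →* ℂˣ) : Submodule ℂ V :=
  ⨅ a, Module.End.eigenspace (ρ a) (χ a)

lemma mem_wt {A V : Type*} [Group A] [AddCommGroup V] [Module ℂ V] (ρ : Representation ℂ A V)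
    (χ : A →* ℂˣ) (v : V) : v ∈ wt ρ χ ↔ ∀ a, ρ a v = (χ a : ℂ) • v := by
  simp [wt, Submodule.mem_iInf]

/-- Weight spaces lie in joint generalized eigenspaces of commuting operators, which are
independent. -/
lemma iSupIndep_wt {A V : Type*} [CommGroup A] [AddCommGroup V] [Module ℂ V]
    (ρ : Representation ℂ A V) : iSupIndep (wt ρ) := by
  have hcomm : ∀ a b, Commute (ρ a) (ρ b) := fun a b => by
    rw [commute_iff_eq, ← map_mul, ← map_mul, mul_comm]
  have h := Module.End.independent_iInf_maxGenEigenspace_of_forall_mapsTo (R := ℂ) (M := V)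
    (fun a : A => (ρ a : Module.End ℂ V)) fun i j φ =>
      Module.End.mapsTo_maxGenEigenspace_of_comm (hcomm j i) φ
  have h2 := h.comp (f := fun (χ : A →* ℂˣ) (a : A) => (χ a : ℂ)) fun χ ψ hχ => by
    ext a
    exact congrFun hχ a
  refine h2.mono fun χ => iInf_mono fun a => ?_
  intro v hv
  rw [Module.End.mem_maxGenEigenspace]
  exact ⟨1, by simpa [sub_eq_zero] using Module.End.mem_eigenspace_iff.1 hv⟩

/-- On a minimal nonzero invariant subspace every element of `A` acts by a scalar, and these scalars
form a character. -/
lemma exists_wt_ne_bot {A V : Type*} [CommGroup A] [AddCommGroup V] [Module ℂ V] [Nontrivial V]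
    [FiniteDimensional ℂ V] (ρ : Representation ℂ A V) : ∃ χ, wt ρ χ ≠ ⊥ := by
  obtain ⟨U, ⟨hU0, hU⟩, hmin⟩ := (wellFounded_lt (α := Submodule ℂ V)).has_min
    {U | U ≠ ⊥ ∧ ∀ a, ∀ v ∈ U, ρ a v ∈ U} ⟨⊤, top_ne_bot, fun _ _ _ => Submodule.mem_top⟩
  have key : ∀ a, ∃ c : ℂ, ∀ v ∈ U, ρ a v = c • v := by
    intro a
    have : Nontrivial U := Submodule.nontrivial_iff_ne_bot.2 hU0
    obtain ⟨c, hc⟩ := Module.End.exists_eigenvalue ((ρ a).restrict (hU a))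
    obtain ⟨⟨u, huU⟩, hu, hu0⟩ := hc.exists_hasEigenvector
    have hu : ρ a u = c • u := by
      simpa [Subtype.ext_iff] using Module.End.mem_eigenspace_iff.1 hu
    refine ⟨c, fun v hv => ?_⟩
    by_contra hne
    refine hmin (U ⊓ Module.End.eigenspace (ρ a) c) ⟨?_, ?_⟩ (lt_of_le_of_ne inf_le_left ?_)
    · intro h
      apply hu0
      have : u ∈ U ⊓ Module.End.eigenspace (ρ a) c :=
        ⟨huU, Module.End.mem_eigenspace_iff.2 hu⟩
      rw [h] at this
      exact Subtype.ext this
    · rintro b w ⟨hwU, hw⟩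
      refine ⟨hU b w hwU, Module.End.mem_eigenspace_iff.2 ?_⟩
      have hw := Module.End.mem_eigenspace_iff.1 hw
      rw [← Module.End.mul_apply, ← map_mul, mul_comm, map_mul, Module.End.mul_apply, hw, map_smul]
    · intro h
      apply hne
      have : v ∈ U ⊓ Module.End.eigenspace (ρ a) c := by rw [h]; exact hv
      exact Module.End.mem_eigenspace_iff.1 this.2
  choose c hc using key
  obtain ⟨u, huU, hu0⟩ := Submodule.exists_mem_ne_zero_of_ne_bot hU0
  let μ : A →* ℂ :=
    { toFun := c
      map_one' := by
        have := hc 1 u huU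
        simp only [map_one, Module.End.one_apply] at this
        exact (smul_left_injective ℂ hu0 (by simpa using this)).symm
      map_mul' := fun a b => by
        have := hc (a * b) u huU
        rw [map_mul, Module.End.mul_apply, hc b u huU, map_smul, hc a u huU, smul_smul] at this
        rw [mul_comm (c b)] at this
        exact (smul_left_injective ℂ hu0 this).symm }
  refine ⟨μ.toHomUnits, fun h => hu0 ?_⟩
  have : u ∈ wt ρ μ.toHomUnits := by
    rw [mem_wt]
    intro a
    exact hc a u huU
  rw [h] at this
  exact this

/-- The action of `H` on the linear characters of `A` dual to an action `φ` of `H` on `A`: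
`(h • χ) a = χ (h⁻¹ a)`. -/
@[reducible] def dualAction {A H : Type*} [CommGroup A] [Group H] (φ : H →* MulAut A) :
    MulAction H (A →* ℂˣ) where
  smul h χ := χ.comp (φ h⁻¹).toMonoidHom
  one_smul χ := by
    change χ.comp (φ 1⁻¹).toMonoidHom = χ
    ext a; simp
  mul_smul g h χ := by
    change χ.comp (φ (g * h)⁻¹).toMonoidHom = (χ.comp (φ h⁻¹).toMonoidHom).comp (φ g⁻¹).toMonoidHom
    ext a; simp

/-- The dimension of an irreducible representation of `A ⋊ H` in which the character `χ` of `A`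
occurs is divisible by the length of the orbit of `χ`: the weight spaces for the characters in this
orbit are permuted transitively, and they span an invariant subspace. -/
lemma index_stabilizer_dvd_finrank {A H V : Type} [CommGroup A] [Group H] [Finite H]
    [AddCommGroup V] [Module ℂ V] [FiniteDimensional ℂ V] (φ : H →* MulAut A)
    (ρ : Representation ℂ (A ⋊[φ] H) V) (hρ : IsIrr ρ) (χ : A →* ℂˣ)
    (hχ : wt (MonoidHom.comp ρ SemidirectProduct.inl) χ ≠ ⊥) :
    letI := dualAction φ
    (MulAction.stabilizer H χ).index ∣ Module.finrank ℂ V := by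
  let _ := dualAction φ
  set σ : Representation ℂ A V := MonoidHom.comp ρ SemidirectProduct.inl with hσ
  have hmove : ∀ (h : H) (ψ : A →* ℂˣ) (v : V), v ∈ wt σ ψ →
      ρ (SemidirectProduct.inr h) v ∈ wt σ (h • ψ) := by
    intro h ψ v hv
    rw [mem_wt] at hv ⊢
    intro a
    have h1 : (SemidirectProduct.inl a : A ⋊[φ] H) * SemidirectProduct.inr h =
        SemidirectProduct.inr h * SemidirectProduct.inl (φ h⁻¹ a) := by
      ext <;> simp
    have h2 := hv (φ h⁻¹ a)
    change ρ (SemidirectProduct.inl a) (ρ (SemidirectProduct.inr h) v) =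
      (ψ (φ h⁻¹ a) : ℂ) • ρ (SemidirectProduct.inr h) v
    rw [← Module.End.mul_apply, ← map_mul, h1, map_mul, Module.End.mul_apply, ← map_smul, ← h2]
    rfl
  have hle : ∀ (h : H) (ψ : A →* ℂˣ),
      Module.finrank ℂ (wt σ ψ) ≤ Module.finrank ℂ (wt σ (h • ψ)) := by
    intro h ψ
    refine LinearMap.finrank_le_finrank_of_injective
      (f := (ρ (SemidirectProduct.inr h)).restrict (hmove h ψ)) ?_
    have hinj : Function.Injective (ρ (SemidirectProduct.inr h)) := by
      refine Function.LeftInverse.injective (g := ρ (SemidirectProduct.inr h)⁻¹) fun v => ?_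
      rw [← Module.End.mul_apply, ← map_mul]
      simp
    intro x y hxy
    exact Subtype.ext (hinj (congrArg Subtype.val hxy))
  have hdim : ∀ ψ ∈ MulAction.orbit H χ, Module.finrank ℂ (wt σ ψ) = Module.finrank ℂ (wt σ χ) := by
    rintro _ ⟨h, rfl⟩
    refine le_antisymm ?_ (hle h χ)
    have h1 := hle h⁻¹ (h • χ)
    rwa [inv_smul_smul] at h1
  have htop : ⨆ ψ : MulAction.orbit H χ, wt σ ψ = ⊤ := by
    refine (hρ.2 _ fun g v hv => ?_).resolve_left fun hbot => hχ ?_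
    · have hstep : ∀ ψ : MulAction.orbit H χ, ∀ w ∈ wt σ ψ,
          ρ g w ∈ ⨆ ψ : MulAction.orbit H χ, wt σ ψ := by
        intro ψ w hw
        refine Submodule.mem_iSup_of_mem (g.right • ψ) ?_
        have h1 := hmove g.right ψ w hw
        have h2 := (mem_wt _ _ _).1 h1 g.left
        have h3 : ρ g w = ρ (SemidirectProduct.inl g.left) (ρ (SemidirectProduct.inr g.right) w) := by
          rw [← Module.End.mul_apply, ← map_mul, SemidirectProduct.inl_left_mul_inr_right]
        rw [h3]
        change σ g.left _ ∈ _
        rw [h2]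
        exact Submodule.smul_mem _ _ h1
      have : (⨆ ψ : MulAction.orbit H χ, wt σ ψ) ≤
          (⨆ ψ : MulAction.orbit H χ, wt σ ψ).comap (ρ g) := iSup_le hstep
      exact this hv
    · exact eq_bot_iff.2 (hbot ▸ le_iSup (fun ψ : MulAction.orbit H χ => wt σ ψ)
        ⟨χ, MulAction.mem_orbit_self χ⟩)
  classical
  have : Finite (MulAction.orbit H χ) := Set.finite_range _
  have := Fintype.ofFinite (MulAction.orbit H χ)
  have hind : iSupIndep fun ψ : MulAction.orbit H χ => wt σ ψ :=
    (iSupIndep_wt σ).comp Subtype.val_injective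
  have hint := DirectSum.isInternal_submodule_of_iSupIndep_of_iSup_eq_top hind htop
  have he := LinearEquiv.finrank_eq (LinearEquiv.ofBijective
    (DirectSum.coeLinearMap fun ψ : MulAction.orbit H χ => wt σ ψ) hint)
  rw [Module.finrank_directSum, Finset.sum_congr rfl fun ψ _ => hdim ψ.1 ψ.2] at he
  rw [← he, MulAction.index_stabilizer]
  rw [Finset.sum_const, Finset.card_univ, smul_eq_mul, ← Nat.card_eq_fintype_card,
    Nat.card_coe_set_eq]
  exact Dvd.intro _ rfl

/-! ### Semidirect products -/

/-- The subgroup generated by all `φ k a / a` with `k` in a normal subgroup `K ≠ 1` is invariant and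
nontrivial, hence everything; a character of `A` fixed by `K` vanishes on it. -/
lemma eq_one_of_fixed {A H B : Type*} [CommGroup A] [Group H] [Group B] (φ : H →* MulAut A)
    (hinj : Function.Injective φ)
    (hirr : ∀ D : Subgroup A, (∀ h, ∀ a ∈ D, φ h a ∈ D) → D = ⊥ ∨ D = ⊤)
    (K : Subgroup H) (hK : K.Normal) (hK1 : K ≠ ⊥) (χ : A →* B)
    (hχ : ∀ k ∈ K, ∀ a, χ (φ k a) = χ a) : χ = 1 := by
  let D : Subgroup A := Subgroup.closure {x | ∃ k ∈ K, ∃ a, x = φ k a * a⁻¹}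
  have hD : D = ⊥ ∨ D = ⊤ := by
    refine hirr D fun h a ha => ?_
    have hle : D ≤ D.comap (φ h).toMonoidHom := by
      rw [Subgroup.closure_le]
      rintro _ ⟨k, hk, a, rfl⟩
      refine Subgroup.subset_closure ⟨h * k * h⁻¹, hK.conj_mem k hk h, φ h a, ?_⟩
      simp
    exact hle ha
  rcases hD with hD | hD
  · exfalso
    apply hK1
    rw [eq_bot_iff]
    intro k hk
    have : φ k = 1 := by
      ext a
      have : φ k a * a⁻¹ ∈ D := Subgroup.subset_closure ⟨k, hk, a, rfl⟩
      rw [hD, Subgroup.mem_bot, mul_inv_eq_one] at this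
      exact this
    exact hinj (this.trans φ.map_one.symm)
  · have hle : D ≤ χ.ker := by
      rw [Subgroup.closure_le]
      rintro _ ⟨k, hk, a, rfl⟩
      simp [MonoidHom.mem_ker, hχ k hk a]
    ext a
    exact hle (hD ▸ Subgroup.mem_top a)

/-- `|L : L ∩ S| = |LS : S|` divides `|H : S|` when `L` is normal. -/
lemma relIndex_dvd_index_of_normal {H : Type*} [Group H] [Finite H] (S L : Subgroup H) [L.Normal] :
    S.relIndex L ∣ S.index := by
  have h1 : (S ⊓ L).relIndex S * S.index = (S ⊓ L).index := Subgroup.relIndex_mul_index inf_le_left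
  have h2 : (S ⊓ L).relIndex L * L.index = (S ⊓ L).index := Subgroup.relIndex_mul_index inf_le_right
  have h3 : L.relIndex (S ⊔ L) * (S ⊔ L).index = L.index := Subgroup.relIndex_mul_index le_sup_right
  rw [Subgroup.relIndex_sup_right] at h3
  rw [Subgroup.inf_relIndex_left] at h1
  rw [Subgroup.inf_relIndex_right] at h2
  refine ⟨(S ⊔ L).index, ?_⟩
  have h4 : L.relIndex S ≠ 0 := Subgroup.index_ne_zero_of_finite
  apply Nat.eq_of_mul_eq_mul_left (Nat.pos_of_ne_zero h4)
  rw [h1, ← h2, ← h3]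
  ring

/-- A subgroup of prime power index contains every normal subgroup of order prime to the index, so
in a product of two nontrivial groups of coprime orders it contains a nontrivial normal subgroup. -/
lemma exists_normal_le_of_isPrimePow_index {Y C : Type*} [Group Y] [Group C] [Finite Y] [Finite C]
    [Nontrivial Y] [Nontrivial C] (hco : (Nat.card Y).Coprime (Nat.card C)) (S : Subgroup (Y × C))
    (p k : ℕ) (hp : p.Prime) (hS : S.index = p ^ k) :
    ∃ K : Subgroup (Y × C), K.Normal ∧ K ≠ ⊥ ∧ K ≤ S := by
  have key : ∀ L : Subgroup (Y × C), L.Normal → ¬ p ∣ Nat.card L → L ≤ S := by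
    intro L hL hpL
    rw [← Subgroup.relIndex_eq_one]
    have h1 := relIndex_dvd_index_of_normal S L
    have h2 : S.relIndex L ∣ Nat.card L := Subgroup.index_dvd_card _
    rw [hS] at h1
    have : (p ^ k).Coprime (Nat.card L) := Nat.Coprime.pow_left k ((hp.coprime_iff_not_dvd).2 hpL)
    exact Nat.eq_one_of_dvd_coprimes this h1 h2
  have hY : Nat.card (MonoidHom.inl Y C).range = Nat.card Y :=
    (Nat.card_congr (MonoidHom.ofInjective (f := MonoidHom.inl Y C)
      (fun a b h => congrArg Prod.fst h)).toEquiv).symm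
  have hC : Nat.card (MonoidHom.inr Y C).range = Nat.card C :=
    (Nat.card_congr (MonoidHom.ofInjective (f := MonoidHom.inr Y C)
      (fun a b h => congrArg Prod.snd h)).toEquiv).symm
  have hne : ∀ (L : Subgroup (Y × C)), 1 < Nat.card L → L ≠ ⊥ := by
    rintro _ h rfl
    simp at h
  by_cases hpY : p ∣ Nat.card Y
  · have hpC : ¬ p ∣ Nat.card C := fun h =>
      hp.one_lt.ne' (Nat.eq_one_of_dvd_coprimes hco hpY h)
    have hn : (MonoidHom.inr Y C).range.Normal := by
      have h : (MonoidHom.inr Y C).range = (MonoidHom.fst Y C).ker := by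
        ext ⟨y, c⟩
        simp [Subgroup.mem_prod, eq_comm]
      rw [h]; infer_instance
    exact ⟨_, hn, hne _ (hC ▸ Finite.one_lt_card), key _ hn (hC ▸ hpC)⟩
  · have hn : (MonoidHom.inl Y C).range.Normal := by
      have h : (MonoidHom.inl Y C).range = (MonoidHom.snd Y C).ker := by
        ext ⟨y, c⟩
        simp [Subgroup.mem_prod, eq_comm]
      rw [h]; infer_instance
    exact ⟨_, hn, hne _ (hY ▸ Finite.one_lt_card), key _ hn (hY ▸ hpY)⟩

/-- If an irreducible representation of `A ⋊ (Y × C)` had prime power dimension, then the orbit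
length of any character `χ` of `A` in it would be a power of that prime; the stabilizer of `χ` would
contain a nontrivial normal subgroup of `Y × C`, forcing `χ = 1`. Hence the representation would
factor through `Y × C`, which is a composite degree group. -/
lemma isCDG_semidirectProduct {A Y C : Type} [CommGroup A] [Group Y] [CommGroup C] [Finite A]
    [Finite Y] [Finite C] [Nontrivial Y] [Nontrivial C]
    (hco : (Nat.card Y).Coprime (Nat.card C)) (φ : Y × C →* MulAut A)
    (hinj : Function.Injective φ)
    (hirr : ∀ D : Subgroup A, (∀ h, ∀ a ∈ D, φ h a ∈ D) → D = ⊥ ∨ D = ⊤)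
    (hY : IsCDG Y) : IsCDG (A ⋊[φ] (Y × C)) := by
  have : Finite (A ⋊[φ] (Y × C)) := Finite.of_equiv _ SemidirectProduct.equivProd.symm
  have hYC : IsCDG (Y × C) := isCDG_prod hY
  rw [isCDG_iff] at hYC ⊢
  intro V _ _ _ ρ hρ hpp
  have := hρ.1
  obtain ⟨χ, hχ⟩ := exists_wt_ne_bot (MonoidHom.comp ρ SemidirectProduct.inl : Representation ℂ A V)
  have hdvd := index_stabilizer_dvd_finrank φ ρ hρ χ hχ
  let _ := dualAction φ
  change (MulAction.stabilizer (Y × C) χ).index ∣ _ at hdvd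
  obtain ⟨p, n, hp, hn, hpn⟩ := id hpp
  rw [← hpn] at hdvd
  obtain ⟨k, -, hk⟩ := (Nat.dvd_prime_pow hp.nat_prime).1 hdvd
  obtain ⟨K, hK, hK1, hKS⟩ := exists_normal_le_of_isPrimePow_index hco _ p k hp.nat_prime hk
  have h1 : χ = 1 := by
    refine eq_one_of_fixed φ hinj hirr K hK hK1 χ fun k hk a => ?_
    have h2 : k⁻¹ • χ = χ := hKS (K.inv_mem hk)
    have h3 : χ (φ k⁻¹⁻¹ a) = χ a := DFunLike.congr_fun h2 a
    simpa using h3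
  subst h1
  -- The fixed space of `A` is nonzero and invariant, so `A` acts trivially.
  have htop : wt (MonoidHom.comp ρ SemidirectProduct.inl : Representation ℂ A V) 1 = ⊤ := by
    refine (hρ.2 _ fun g v hv => ?_).resolve_left hχ
    rw [mem_wt] at hv ⊢
    intro a
    have h2 := hv (φ g.right⁻¹ a)
    have h1 : (SemidirectProduct.inl a : A ⋊[φ] (Y × C)) * g =
        g * SemidirectProduct.inl (φ g.right⁻¹ a) := by
      ext <;> simp [mul_comm]
    change ρ (SemidirectProduct.inl a) (ρ g v) = ((1 : ℂˣ) : ℂ) • _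
    change ρ (SemidirectProduct.inl _) v = ((1 : ℂˣ) : ℂ) • _ at h2
    rw [← Module.End.mul_apply, ← map_mul, h1, map_mul, Module.End.mul_apply, h2]
    simp
  refine hYC V _ (hρ.comp SemidirectProduct.inr fun g => ⟨g.right, 1, fun v => ?_⟩) hpp
  have hv : ρ (SemidirectProduct.inr g.right) v ∈
      wt (MonoidHom.comp ρ SemidirectProduct.inl : Representation ℂ A V) 1 := by
    rw [htop]; trivial
  have h1 := (mem_wt _ _ _).1 hv g.left
  change ρ (SemidirectProduct.inl g.left) _ = ((1 : ℂˣ) : ℂ) • _ at h1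
  rw [← Module.End.mul_apply, ← map_mul, SemidirectProduct.inl_left_mul_inr_right] at h1
  simpa using h1

/-- `A` is self-centralizing when `H` acts faithfully. -/
lemma mem_ker_rightHom_of_commute {A H : Type*} [CommGroup A] [Group H] (φ : H →* MulAut A)
    (hinj : Function.Injective φ) (x : A ⋊[φ] H)
    (hx : ∀ a, x * SemidirectProduct.inl a = SemidirectProduct.inl a * x) :
    x ∈ (SemidirectProduct.rightHom : A ⋊[φ] H →* H).ker := by
  rw [MonoidHom.mem_ker]
  apply hinj
  rw [map_one]
  ext a
  have := congrArg SemidirectProduct.left (hx a)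
  simpa [mul_comm a] using this

/-- For a faithful irreducible action, `A` is its own centralizer and so lies in every nontrivial
normal subgroup. -/
lemma ker_rightHom_le_of_normal {A H : Type*} [CommGroup A] [Group H] (φ : H →* MulAut A)
    (hinj : Function.Injective φ)
    (hirr : ∀ D : Subgroup A, (∀ h, ∀ a ∈ D, φ h a ∈ D) → D = ⊥ ∨ D = ⊤)
    (M : Subgroup (A ⋊[φ] H)) (hM : M.Normal) (hM1 : M ≠ ⊥) :
    (SemidirectProduct.rightHom : A ⋊[φ] H →* H).ker ≤ M := by
  rw [← SemidirectProduct.range_inl_eq_ker_rightHom]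
  rcases hirr (M.comap SemidirectProduct.inl) fun h a ha => by
    rw [Subgroup.mem_comap, SemidirectProduct.inl_aut, map_inv]
    exact hM.conj_mem _ ha _ with h | h
  · exfalso
    have h1 : ∀ a, SemidirectProduct.inl a ∈ M → a = 1 := fun a ha => by
      have : a ∈ M.comap SemidirectProduct.inl := ha
      rwa [h] at this
    apply hM1
    rw [eq_bot_iff]
    intro x hx
    have hxk := mem_ker_rightHom_of_commute φ hinj x fun a => by
      have hmem : x * SemidirectProduct.inl a * x⁻¹ ∈
          (SemidirectProduct.inl : A →* A ⋊[φ] H).range := by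
        rw [SemidirectProduct.range_inl_eq_ker_rightHom]
        simp [MonoidHom.mem_ker]
      obtain ⟨b, hb⟩ := hmem
      have hba : b * a⁻¹ = 1 := h1 _ (by
        rw [map_mul, hb, map_inv]
        simpa [mul_assoc] using
          M.mul_mem hx (hM.conj_mem _ (M.inv_mem hx) (SemidirectProduct.inl a)))
      rw [mul_inv_eq_one.1 hba] at hb
      exact (eq_mul_inv_iff_mul_eq.1 hb).symm
    rw [← SemidirectProduct.range_inl_eq_ker_rightHom] at hxk
    obtain ⟨a, rfl⟩ := hxk
    rw [h1 a hx, map_one]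
    exact Subgroup.one_mem _
  · rintro _ ⟨a, rfl⟩
    exact (h ▸ Subgroup.mem_top a : a ∈ M.comap SemidirectProduct.inl)

/-! ### Faithful irreducible modules -/

/-- In a finite group, every nontrivial normal subgroup contains a minimal one. -/
lemma IsUniqueMinimalNormal.le_of_normal {Y : Type*} [Group Y] [Finite Y] {N : Subgroup Y}
    (hN : IsUniqueMinimalNormal Y N) {K : Subgroup Y} (hK : K.Normal) (hK1 : K ≠ ⊥) : N ≤ K := by
  obtain ⟨M, ⟨hM, hM1, hMK⟩, hmin⟩ := (wellFounded_lt (α := Subgroup Y)).has_min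
    {M | M.Normal ∧ M ≠ ⊥ ∧ M ≤ K} ⟨K, hK, hK1, le_rfl⟩
  have : IsMinimalNormal M := ⟨hM, hM1, fun L hL hLM => by
    by_contra! h
    exact hmin L ⟨hL, h.1, hLM.trans hMK⟩ (lt_of_le_of_ne hLM h.2)⟩
  exact hN.2 M this ▸ hMK

/-- Over a prime field of characteristic not dividing the order of `Y`, some simple module has
trivial kernel: by Maschke's theorem the group algebra is a sum of simple modules, so the minimal
normal subgroup `N` moves one of them, and the kernel of a module moved by `N` is trivial. -/
lemma exists_faithful_simple {Y : Type} [Group Y] [Finite Y] (N : Subgroup Y)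
    (hN : IsUniqueMinimalNormal Y N) (r : ℕ) [Fact r.Prime] (hr : ¬ r ∣ Nat.card Y) :
    ∃ W : Submodule (MonoidAlgebra (ZMod r) Y) (MonoidAlgebra (ZMod r) Y),
      IsSimpleModule (MonoidAlgebra (ZMod r) Y) W ∧
      ∀ y : Y, (∀ w ∈ W, MonoidAlgebra.of (ZMod r) Y y * w = w) → y = 1 := by
  have : NeZero (Nat.card Y : ZMod r) := ⟨fun h => hr ((ZMod.natCast_eq_zero_iff _ _).1 h)⟩
  set R := MonoidAlgebra (ZMod r) Y
  have hex : ∃ W : Submodule R R, IsSimpleModule R W ∧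
      ¬ ∀ y ∈ N, ∀ w ∈ W, MonoidAlgebra.of (ZMod r) Y y * w = w := by
    by_contra! hall
    apply hN.1.2.1
    rw [eq_bot_iff]
    intro y hy
    have hfix : ∀ w : R, MonoidAlgebra.of (ZMod r) Y y * w = w := by
      intro w
      have hw : w ∈ sSup {W : Submodule R R | IsSimpleModule R W} := by
        rw [IsSemisimpleModule.sSup_simples_eq_top]; trivial
      rw [sSup_eq_iSup'] at hw
      refine Submodule.iSup_induction _ (motive := fun w => MonoidAlgebra.of (ZMod r) Y y * w = w)
        hw (fun W w hw => hall W.1 W.2 y hy w hw) (mul_zero _) fun a b ha hb => ?_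
      rw [mul_add, ha, hb]
    have h1 := hfix 1
    rw [mul_one, ← map_one (MonoidAlgebra.of (ZMod r) Y)] at h1
    exact MonoidAlgebra.of_injective h1
  obtain ⟨W, hW, hWN⟩ := hex
  refine ⟨W, hW, ?_⟩
  let K : Subgroup Y :=
    { carrier := {y | ∀ w ∈ W, MonoidAlgebra.of (ZMod r) Y y * w = w}
      one_mem' := fun w _ => by rw [map_one, one_mul]
      mul_mem' := fun {a b} ha hb w hw => by rw [map_mul, mul_assoc, hb w hw, ha w hw]
      inv_mem' := fun {a} ha w hw => by
        have h := ha w hw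
        calc _ = MonoidAlgebra.of (ZMod r) Y a⁻¹ * (MonoidAlgebra.of (ZMod r) Y a * w) := by rw [h]
          _ = w := by rw [← mul_assoc, ← map_mul, inv_mul_cancel, map_one, one_mul] }
  have hK : K.Normal := ⟨fun k hk g w hw => by
    have h := hk (MonoidAlgebra.of (ZMod r) Y g⁻¹ * w) (W.smul_mem _ hw)
    rw [map_mul, map_mul, mul_assoc, mul_assoc, h, ← mul_assoc, ← map_mul, mul_inv_cancel, map_one,
      one_mul]⟩
  intro y hy
  by_contra hy1
  have hK1 : K ≠ ⊥ := fun h => hy1 (by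
    have : y ∈ K := hy
    rwa [h] at this)
  exact hWN fun z hz => hN.le_of_normal hK hK1 hz

/-- The data from which the next group is built: a faithful irreducible action of `Y × C` on an
elementary abelian `r`-group `A`, where `C` is cyclic of order `q` and acts by scalars. -/
lemma exists_action {Y : Type} [Group Y] [Finite Y] (N : Subgroup Y)
    (hN : IsUniqueMinimalNormal Y N) :
    ∃ (A C : Type) (_ : CommGroup A) (_ : CommGroup C) (_ : Finite A) (_ : Finite C) (q r : ℕ)
      (φ : Y × C →* MulAut A), q.Prime ∧ r.Prime ∧ Nat.card C = q ∧ ¬ q ∣ Nat.card Y ∧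
      IsPGroup r A ∧ ¬ r ∣ Nat.card (Y × C) ∧ Nontrivial A ∧ Function.Injective φ ∧
      ∀ D : Subgroup A, (∀ h, ∀ a ∈ D, φ h a ∈ D) → D = ⊥ ∨ D = ⊤ := by
  have hY0 : 0 < Nat.card Y := Nat.card_pos
  obtain ⟨q, hqY, hq⟩ := Nat.exists_infinite_primes (Nat.card Y + 1)
  have hqd : ¬ q ∣ Nat.card Y := fun h => by
    have := Nat.le_of_dvd hY0 h
    omega
  obtain ⟨r, hr, hrY, hrq⟩ := Nat.exists_prime_gt_modEq_one (Nat.card Y * q) hq.ne_zero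
  have : Fact r.Prime := ⟨hr⟩
  have : Fact q.Prime := ⟨hq⟩
  have hrd : ¬ r ∣ Nat.card Y * q := fun h => by
    have := Nat.le_of_dvd (Nat.mul_pos hY0 hq.pos) h
    omega
  obtain ⟨u, hu⟩ : ∃ u : (ZMod r)ˣ, orderOf u = q := by
    refine exists_prime_orderOf_dvd_card' q ?_
    rw [Nat.card_eq_fintype_card, ZMod.card_units]
    exact (Nat.modEq_iff_dvd' hr.one_le).1 hrq.symm
  obtain ⟨W, hW, hWY⟩ := exists_faithful_simple N hN r fun h => hrd (h.mul_right q)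
  let C := Subgroup.zpowers u
  have hC : Nat.card C = q := by rw [Nat.card_zpowers, hu]
  let ψ : Y × C →* MonoidAlgebra (ZMod r) Y :=
    { toFun := fun g => MonoidAlgebra.single g.1 ((g.2 : (ZMod r)ˣ) : ZMod r)
      map_one' := rfl
      map_mul' := fun a b => by simp [MonoidAlgebra.single_mul_single] }
  let _ : MulDistribMulAction (Y × C) (Multiplicative W) :=
    { smul := fun g a => Multiplicative.ofAdd (ψ g • a.toAdd)
      one_smul := fun a => by
        change Multiplicative.ofAdd (ψ 1 • a.toAdd) = a
        rw [map_one, one_smul, ofAdd_toAdd]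
      mul_smul := fun g h a => by
        change Multiplicative.ofAdd (ψ (g * h) • a.toAdd) = Multiplicative.ofAdd (ψ g • ψ h • a.toAdd)
        rw [map_mul, mul_smul]
      smul_mul := fun g a b => by
        change Multiplicative.ofAdd (ψ g • (a.toAdd + b.toAdd)) =
          Multiplicative.ofAdd (ψ g • a.toAdd + ψ g • b.toAdd)
        rw [smul_add]
      smul_one := fun g => by
        change Multiplicative.ofAdd (ψ g • (0 : W)) = Multiplicative.ofAdd 0
        rw [smul_zero] }
  have : Finite (MonoidAlgebra (ZMod r) Y) := Module.finite_of_finite (ZMod r)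
  have hnt : Nontrivial W := IsSimpleModule.nontrivial (MonoidAlgebra (ZMod r) Y) W
  have hψ : ∀ (y : Y) (c : C) (w : MonoidAlgebra (ZMod r) Y),
      ψ (y, c) * w = ((c : (ZMod r)ˣ) : ZMod r) • (MonoidAlgebra.of (ZMod r) Y y * w) := by
    intro y c w
    have : ψ (y, c) = ((c : (ZMod r)ˣ) : ZMod r) • MonoidAlgebra.of (ZMod r) Y y := by
      simp [ψ]
    rw [this, smul_mul_assoc]
  refine ⟨Multiplicative W, C, inferInstance, inferInstance, inferInstanceAs (Finite W),
    inferInstance, q, r, MulDistribMulAction.toMulAut (Y × C) (Multiplicative W), hq, hr, hC, hqd,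
    ?_, ?_, inferInstance, ?_, ?_⟩
  · intro a
    refine ⟨1, ?_⟩
    change Multiplicative.ofAdd (r ^ 1 • a.toAdd) = Multiplicative.ofAdd 0
    congr 1
    rw [pow_one, ← Nat.cast_smul_eq_nsmul (ZMod r), ZMod.natCast_self, zero_smul]
  · rwa [Nat.card_prod, hC]
  · rw [injective_iff_map_eq_one]
    rintro ⟨y, c⟩ h
    have hfix : ∀ w ∈ W, ψ (y, c) * w = w := fun w hw => by
      have h1 := DFunLike.congr_fun h (Multiplicative.ofAdd (⟨w, hw⟩ : W))
      exact congrArg (fun a : Multiplicative W => (a.toAdd : MonoidAlgebra (ZMod r) Y)) h1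
    have hpow : ∀ n : ℕ, ∀ w ∈ W, ψ (y, c) ^ n * w = w := by
      intro n
      induction n with
      | zero => intro w _; rw [pow_zero, one_mul]
      | succ n ih => intro w hw; rw [pow_succ, mul_assoc, hfix w hw, ih w hw]
    -- The power of order `|Y|` kills the first coordinate and leaves a scalar.
    have hc : c = 1 := by
      obtain ⟨⟨w, hw⟩, hw0⟩ := exists_ne (0 : W)
      have h1 := hpow (Nat.card Y) w hw
      rw [← map_pow, Prod.pow_mk, pow_card_eq_one', hψ, map_one, one_mul] at h1
      have h2 : (((c ^ Nat.card Y : C) : (ZMod r)ˣ) : ZMod r) = 1 := by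
        refine smul_left_injective (ZMod r) (m := w) (fun h => hw0 (Subtype.ext h)) ?_
        simpa using h1
      have h3 : c ^ Nat.card Y = 1 := by
        ext1; ext1; exact h2
      refine (Nat.Coprime.pow_left_bijective ?_).1 (h3.trans (one_pow _).symm)
      rw [hC]
      exact (hq.coprime_iff_not_dvd).2 hqd
    subst hc
    rw [hWY y fun w hw => by simpa [hψ] using hfix w hw]
    rfl
  · intro D hD
    have hDs : ∀ g, ∀ w : W, Multiplicative.ofAdd w ∈ D → Multiplicative.ofAdd (ψ g • w) ∈ D :=
      fun g w hw => hD g _ hw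
    let U : Submodule (MonoidAlgebra (ZMod r) Y) W :=
      { carrier := {w | Multiplicative.ofAdd w ∈ D}
        zero_mem' := D.one_mem
        add_mem' := fun ha hb => D.mul_mem ha hb
        smul_mem' := fun x w hw => by
          change Multiplicative.ofAdd (x • w) ∈ D
          induction x using MonoidAlgebra.induction_on with
          | of y =>
            have := hDs (y, 1) w hw
            simpa [ψ] using this
          | add a b ha hb =>
            rw [add_smul]
            exact D.mul_mem ha hb
          | smul c a ha =>
            -- Scalars from the prime field act as integer multiples.
            have h1 : (c • a) • w = c.val • (a • w) := by
              conv_lhs => rw [← ZMod.natCast_zmod_val c, Nat.cast_smul_eq_nsmul, smul_assoc]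
            rw [h1, ofAdd_nsmul]
            exact D.pow_mem ha _ }
    have hU := eq_bot_or_eq_top U
    rcases hU with hU | hU
    · left
      rw [eq_bot_iff]
      intro a ha
      have : a.toAdd ∈ U := ha
      rw [hU] at this
      exact this
    · right
      rw [eq_top_iff]
      intro a _
      have : a.toAdd ∈ U := hU ▸ Submodule.mem_top
      exact this

/-! ### The tower of groups -/

/-- The group `X = A ⋊ (Y × C)` is one step further up than `Y`. Its subgroup `A` is contained in
every nontrivial normal subgroup and is its own centralizer, so `A` is the unique minimal normal
subgroup and the largest nilpotent normal subgroup of `X`. -/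
lemma exists_step {Y : Type} [Group Y] [Finite Y] [Nontrivial Y] [Group.IsSolvable Y] (n : ℕ)
    (hcdg : IsCDG Y) (hfit : FittingHeightIs Y (n + 1))
    (hN : ∃ N : Subgroup Y, IsUniqueMinimalNormal Y N) (hsyl : HasSylowTower Y) :
    ∃ (X : Type) (_ : Group X) (_ : Finite X), Nontrivial X ∧ Group.IsSolvable X ∧ IsCDG X ∧
      FittingHeightIs X (n + 2) ∧ (∃ N : Subgroup X, IsUniqueMinimalNormal X N) ∧
      HasSylowTower X := by
  obtain ⟨N, hN⟩ := hN
  obtain ⟨A, C, _, _, _, _, q, r, φ, hq, hr, hC, hqY, hA, hrYC, _, hinj, hirr⟩ := exists_action N hN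
  have : Fact q.Prime := ⟨hq⟩
  have : Nontrivial C := Finite.one_lt_card_iff_nontrivial.1 (hC ▸ hq.one_lt)
  have hco : (Nat.card Y).Coprime (Nat.card C) := by
    rw [hC, Nat.coprime_comm]
    exact (hq.coprime_iff_not_dvd).2 hqY
  let π : A ⋊[φ] (Y × C) →* Y × C := SemidirectProduct.rightHom
  have hπ : Function.Surjective π := SemidirectProduct.rightHom_surjective
  have hker : π.ker = (SemidirectProduct.inl : A →* A ⋊[φ] (Y × C)).range :=
    SemidirectProduct.range_inl_eq_ker_rightHom.symm
  have e : A ≃* π.ker := (MonoidHom.ofInjective SemidirectProduct.inl_injective).trans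
    (MulEquiv.subgroupCongr hker.symm)
  have hker1 : π.ker ≠ ⊥ := by
    have : Nontrivial π.ker := e.symm.toEquiv.nontrivial
    exact Subgroup.nontrivial_iff_ne_bot _ |>.1 this
  have hle := ker_rightHom_le_of_normal φ hinj hirr
  have hmax : ∀ K : Subgroup (A ⋊[φ] (Y × C)), K.Normal → Group.IsNilpotent K → K ≤ π.ker := by
    intro K hK hKn
    by_cases hK1 : K = ⊥
    · rw [hK1]; exact bot_le
    -- The center of `K` is a nontrivial normal subgroup, so it contains `A`.
    have : Nontrivial K := (Subgroup.nontrivial_iff_ne_bot _).2 hK1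
    have hZ : (Subgroup.center K).map K.subtype ≠ ⊥ := by
      rw [Ne, Subgroup.map_eq_bot_iff_of_injective _ K.subtype_injective]
      exact Group.IsNilpotent.center_ne_bot K
    intro x hx
    refine mem_ker_rightHom_of_commute φ hinj x fun a => ?_
    have ha : SemidirectProduct.inl a ∈ (Subgroup.center K).map K.subtype :=
      hle _ inferInstance hZ (by simp [MonoidHom.mem_ker])
    obtain ⟨z, hz, hza⟩ := ha
    rw [← hza]
    exact congrArg Subtype.val (Subgroup.mem_center_iff.1 hz ⟨x, hx⟩)
  have hfin : Finite (A ⋊[φ] (Y × C)) := Finite.of_equiv _ SemidirectProduct.equivProd.symm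
  have hnt : Nontrivial (A ⋊[φ] (Y × C)) := SemidirectProduct.inl_injective.nontrivial
  refine ⟨A ⋊[φ] (Y × C), inferInstance, hfin, hnt, ?_,
    isCDG_semidirectProduct hco φ hinj hirr hcdg, ?_, ⟨π.ker, ?_⟩, ?_⟩
  · exact Group.isSolvable_of_ker_le_range (SemidirectProduct.inl : A →* A ⋊[φ] (Y × C)) π hker.le
  · refine fittingHeightIs_succ π hπ (n + 1) ?_ hker1 hmax (fittingHeightIs_prod n hfit)
    exact Group.nilpotent_of_mulEquiv e
  · refine ⟨⟨inferInstance, hker1, fun M hM hMA => ?_⟩, fun M hM => ?_⟩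
    · by_cases h : M = ⊥
      · exact Or.inl h
      · exact Or.inr (le_antisymm hMA (hle M hM h))
    · exact ((hM.2.2 _ inferInstance (hle M hM.1 hM.2.1)).resolve_left hker1).symm
  · refine hasSylowTower_of_surjective π hπ r hr (hA.of_equiv e) hrYC ?_
    refine hasSylowTower_of_surjective (MonoidHom.fst Y C) Prod.fst_surjective q hq ?_ hqY hsyl
    have hCp : IsPGroup q C := IsPGroup.of_card (n := 1) (by rw [hC, pow_one])
    refine IsPGroup.of_injective hCp ((MonoidHom.snd Y C).comp (MonoidHom.fst Y C).ker.subtype) ?_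
    rintro ⟨⟨y, c⟩, h⟩ ⟨⟨y', c'⟩, h'⟩ hcc
    obtain rfl : y = 1 := h
    obtain rfl : y' = 1 := h'
    obtain rfl : c = c' := hcc
    rfl

/-- The tower starts with the cyclic group of order `2`, of Fitting height `1`. -/
lemma exists_tower (n : ℕ) :
    ∃ (X : Type) (_ : Group X) (_ : Finite X), Nontrivial X ∧ Group.IsSolvable X ∧ IsCDG X ∧
      FittingHeightIs X (n + 1) ∧ (∃ N : Subgroup X, IsUniqueMinimalNormal X N) ∧
      HasSylowTower X := by
  induction n with
  | zero =>
    let X := Multiplicative (ZMod 2)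
    have hX : Nat.card X = 2 := Nat.card_zmod 2
    have : Fact (Nat.Prime 2) := ⟨Nat.prime_two⟩
    have hsimple : ∀ M : Subgroup X, M = ⊥ ∨ M = ⊤ := fun M =>
      have : Fact (Nat.card X).Prime := ⟨hX ▸ Nat.prime_two⟩
      M.eq_bot_or_eq_top_of_prime_card
    let f : X →* Unit := 1
    have hf : Function.Surjective f := fun _ => ⟨1, rfl⟩
    have hk : f.ker = ⊤ := MonoidHom.ker_one
    have hfit : FittingHeightIs Unit 0 := by
      refine ⟨⟨fun _ => ⊥, rfl, Subsingleton.elim _ _, fun _ => inferInstance, fun i hi => ?_,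
        fun i hi => ?_⟩, fun m _ => Nat.zero_le m⟩ <;> omega
    have hsyl : HasSylowTower Unit := by
      refine ⟨0, fun _ => ⊥, rfl, Subsingleton.elim _ _, fun _ => inferInstance, fun i hi => ?_,
        fun i hi => ?_⟩ <;> omega
    refine ⟨X, inferInstance, inferInstance, inferInstance, inferInstance, isCDG_of_comm, ?_,
      ⟨⊤, ⟨inferInstance, top_ne_bot, fun M _ _ => hsimple M⟩, fun M hM =>
        (hsimple M).resolve_left hM.2.1⟩, ?_⟩
    · refine fittingHeightIs_succ f hf 0 inferInstance (hk ▸ top_ne_bot) (fun K _ _ => ?_) hfit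
      rw [hk]; exact le_top
    · refine hasSylowTower_of_surjective f hf 2 Nat.prime_two ?_ (by simp) hsyl
      exact (IsPGroup.of_card (n := 1) (by rw [hX, pow_one])).to_subgroup _
  | succ n ih =>
    obtain ⟨Y, _, _, _, _, hcdg, hfit, hN, hsyl⟩ := ih
    exact exists_step n hcdg hfit hN hsyl

/-- **Theorem (Statement 10).** For every `i ≥ 1` there is a finite solvable CDG of Fitting
height `i + 1` having a unique minimal normal subgroup and a Sylow tower. -/
theorem exists_solvable_CDG_uniqueMinimalNormal_sylowTower (i : ℕ) (hi : 1 ≤ i) :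
    ∃ (G : Type) (_ : Group G) (_ : Finite G),
      IsSolvable G ∧ IsCDG G ∧ FittingHeightIs G (i + 1) ∧
      (∃ N : Subgroup G, IsUniqueMinimalNormal G N) ∧
      HasSylowTower G := by
  obtain ⟨G, hG, hfin, -, h⟩ := exists_tower i
  exact ⟨G, hG, hfin, h⟩
end

section
/- If G is a finite nonabelian group such that 1 is the only prime power among the degrees of the irreducible complex characters of G, then the order of G is divisible by at least three distinct primes. -/
open Module Representation

/-! ### Degrees divide the group order -/

section Degree

variable {G V : Type} [Group G] [AddCommGroup V] [Module ℂ V]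

/-- Irreducibility in terms of plain submodules stable under the action. -/
theorem isIrreducible_iff_stable (ρ : Representation ℂ G V) :
    ρ.IsIrreducible ↔ Nontrivial V ∧ ∀ U : Submodule ℂ V,
      (∀ g, ∀ v ∈ U, ρ g v ∈ U) → U = ⊥ ∨ U = ⊤ := by
  constructor
  · intro h
    refine ⟨?_, fun U hU => ?_⟩
    · by_contra hV
      rw [not_nontrivial_iff_subsingleton] at hV
      exact bot_ne_top (α := Subrepresentation ρ)
        (Subrepresentation.toSubmodule_injective (Subsingleton.elim _ _))
    · have := h.eq_bot_or_eq_top ⟨U, fun g v hv => hU g v hv⟩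
      exact this.imp (congrArg Subrepresentation.toSubmodule)
        (congrArg Subrepresentation.toSubmodule)
  · rintro ⟨hV, h⟩
    have hne : (⊥ : Subrepresentation ρ) ≠ ⊤ := fun e =>
      bot_ne_top (α := Submodule ℂ V) (congrArg Subrepresentation.toSubmodule e)
    have : Nontrivial (Subrepresentation ρ) := ⟨_, _, hne⟩
    exact ⟨fun a => (h a.toSubmodule fun g v hv => a.apply_mem_toSubmodule g hv).imp
      (fun e => Subrepresentation.toSubmodule_injective e)
      (fun e => Subrepresentation.toSubmodule_injective e)⟩

variable [FiniteDimensional ℂ V]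

theorem isIntegral_trace_of_pow_eq_one (f : End ℂ V) {n : ℕ} (hn : n ≠ 0) (hf : f ^ n = 1) :
    IsIntegral ℤ (LinearMap.trace ℂ V f) := by
  rw [Module.End.trace_eq_sum_roots_charpoly_of_splits (IsAlgClosed.splits _)]
  refine IsIntegral.multiset_sum fun μ hμ => ?_
  have hr := (Polynomial.mem_roots'.mp hμ).2
  rw [← Module.End.hasEigenvalue_iff_isRoot_charpoly] at hr
  obtain ⟨v, hv⟩ := hr.exists_hasEigenvector
  have hpow := hv.pow_apply n
  rw [hf, Module.End.one_apply] at hpow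
  have h1 : μ ^ n = 1 := by
    have : (μ ^ n - 1) • v = 0 := by rw [sub_smul, ← hpow, one_smul, sub_self]
    exact sub_eq_zero.mp ((smul_eq_zero.mp this).resolve_right hv.2)
  exact IsIntegral.of_pow (Nat.pos_of_ne_zero hn) (h1 ▸ isIntegral_one)

/-- Integrality of `|G| / χ(1)`: this number is the scalar by which `∑ χ(g⁻¹) g` acts. -/
theorem finrank_dvd_card_of_isIrreducible [Finite G] (ρ : Representation ℂ G V)
    [ρ.IsIrreducible] : finrank ℂ V ∣ Nat.card G := by
  classical
  have := Fintype.ofFinite G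
  have hcard : (Nat.card G : ℂ) ≠ 0 := by exact_mod_cast Nat.card_pos.ne'
  have := invertibleOfNonzero hcard
  have hV : Nontrivial V := ((isIrreducible_iff_stable ρ).mp inferInstance).1
  have hd : (finrank ℂ V : ℂ) ≠ 0 := by exact_mod_cast finrank_pos.ne'
  -- Schur's lemma makes `∑ χ(g⁻¹) ρ(g)` a scalar `c`, and comparing traces gives `c * χ(1) = |G|`.
  let f : End ℂ V := ∑ g, ρ.character g⁻¹ • ρ g
  have hcomm (h : G) : f ∘ₗ ρ h = ρ h ∘ₗ f := by
    change f * ρ h = ρ h * f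
    simp only [f, Finset.sum_mul, Finset.mul_sum, smul_mul_assoc, mul_smul_comm, ← map_mul]
    refine Fintype.sum_equiv (MulAut.conj h⁻¹).toEquiv _ _ fun g => ?_
    simp [mul_assoc, ← char_conj ρ g⁻¹ h⁻¹]
  obtain ⟨c, hc⟩ := (IsIrreducible.algebraMap_intertwiningMap_bijective_of_isAlgClosed
    (ρ := ρ)).2 (⟨f, hcomm⟩ : IntertwiningMap ρ ρ)
  have hcf : algebraMap ℂ (End ℂ V) c = f := by
    have := congrArg IntertwiningMap.toLinearMap hc
    exact this
  have htr : c * finrank ℂ V = Nat.card G := by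
    have h1 : LinearMap.trace ℂ V f = c * finrank ℂ V := by
      rw [← hcf, Algebra.algebraMap_eq_smul_one, map_smul, LinearMap.trace_one, smul_eq_mul]
    rw [← h1]
    have h2 := char_orthonormal ρ ρ
    rw [if_pos ⟨Representation.Equiv.refl ρ⟩, inv_mul_eq_one₀ hcard] at h2
    rw [h2]
    simp only [f, map_sum, map_smul, smul_eq_mul]
    exact Finset.sum_congr rfl fun g _ => mul_comm _ _
  -- `f` is the image of an element of the group ring of `G` over the algebraic integers, a
  -- finite module over them; hence `f`, and with it `c`, is integral.
  let R := integralClosure ℤ ℂ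
  have hint (g : G) : IsIntegral ℤ (ρ.character g) := by
    refine isIntegral_trace_of_pow_eq_one (ρ g) (orderOf_pos g).ne' ?_
    rw [← map_pow, pow_orderOf_eq_one, map_one]
  let φ : MonoidAlgebra R G →ₐ[R] End ℂ V := MonoidAlgebra.lift R (End ℂ V) G ρ
  let a : MonoidAlgebra R G := ∑ g, MonoidAlgebra.single g (⟨ρ.character g⁻¹, hint g⁻¹⟩ : R)
  have hφ : φ a = f := by
    simp only [a, f, φ, map_sum, MonoidAlgebra.lift_single]
    rfl
  have hfin : Module.Finite R (MonoidAlgebra R G) := inferInstance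
  have hfint : IsIntegral R f := hφ ▸ (IsIntegral.of_finite R a).map φ
  rw [← hcf, isIntegral_algebraMap_iff (algebraMap ℂ (End ℂ V)).injective] at hfint
  have hcint : IsIntegral ℤ c := isIntegral_trans c hfint
  have hq : c = algebraMap ℚ ℂ ((Nat.card G : ℚ) / finrank ℂ V) := by
    rw [eq_div_iff hd |>.mpr htr]; simp
  rw [hq, isIntegral_algebraMap_iff (algebraMap ℚ ℂ).injective,
    IsIntegrallyClosed.isIntegral_iff] at hcint
  obtain ⟨z, hz⟩ := hcint
  have hd' : (finrank ℂ V : ℚ) ≠ 0 := by exact_mod_cast finrank_pos.ne'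
  rw [eq_div_iff hd'] at hz
  have : (finrank ℂ V : ℤ) ∣ Nat.card G := ⟨z, by
    rw [eq_intCast] at hz
    rw [mul_comm]
    exact_mod_cast hz.symm⟩
  exact_mod_cast this

end Degree

/-! ### Irreducible constituents -/

section Subreps

variable {G V : Type} [Group G] [Finite G] [AddCommGroup V] [Module ℂ V]

/-- Maschke's theorem for stable submodules. -/
theorem exists_stable_isCompl (ρ : Representation ℂ G V) (U : Submodule ℂ V)
    (hU : ∀ g, ∀ v ∈ U, ρ g v ∈ U) :
    ∃ W : Submodule ℂ V, (∀ g, ∀ v ∈ W, ρ g v ∈ W) ∧ IsCompl U W := by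
  have : NeZero (Nat.card G : ℂ) := ⟨by exact_mod_cast Nat.card_pos.ne'⟩
  obtain ⟨W, hW⟩ := exists_isCompl (⟨U, fun g v hv => hU g v hv⟩ : Subrepresentation ρ)
  refine ⟨W.toSubmodule, fun g v hv => W.apply_mem_toSubmodule g hv, ?_⟩
  rw [isCompl_iff, disjoint_iff, codisjoint_iff] at hW ⊢
  exact ⟨congrArg Subrepresentation.toSubmodule hW.1, congrArg Subrepresentation.toSubmodule hW.2⟩

variable [FiniteDimensional ℂ V]

/-- A stable submodule of dimension not divisible by `p` contains an irreducible one with the same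
property. For `p = 0` this says that a nonzero stable submodule contains an irreducible one. -/
theorem exists_irreducible_le_not_dvd_finrank (ρ : Representation ℂ G V) (p : ℕ)
    (U : Submodule ℂ V) (hU : ∀ g, ∀ v ∈ U, ρ g v ∈ U) (hp : ¬ p ∣ finrank ℂ U) :
    ∃ S : Subrepresentation ρ, S.toSubmodule ≤ U ∧ S.toRepresentation.IsIrreducible ∧
      ¬ p ∣ finrank ℂ S.toSubmodule := by
  -- A stable submodule of least dimension among those inside `U` with dimension not divisible by
  -- `p` is irreducible: if it split, one of the two summands would be a smaller example.
  obtain ⟨S, ⟨hSU, hSp⟩, hmin⟩ :=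
    (measure fun S : Subrepresentation ρ => finrank ℂ S.toSubmodule).wf.has_min
      {S | S.toSubmodule ≤ U ∧ ¬ p ∣ finrank ℂ S.toSubmodule}
      ⟨⟨U, fun g v hv => hU g v hv⟩, le_rfl, hp⟩
  refine ⟨S, hSU, (isIrreducible_iff_stable _).mpr ⟨?_, fun T hT => ?_⟩, hSp⟩
  · by_contra hS
    rw [not_nontrivial_iff_subsingleton] at hS
    exact hSp (finrank_zero_of_subsingleton (R := ℂ) (M := S.toSubmodule) ▸ dvd_zero p)
  · obtain ⟨W, hW, hTW⟩ := exists_stable_isCompl S.toRepresentation T hT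
    have hsum := Submodule.finrank_add_eq_of_isCompl hTW
    have key (A : Submodule ℂ S.toSubmodule)
        (hA : ∀ g, ∀ v ∈ A, S.toRepresentation g v ∈ A) (hAp : ¬ p ∣ finrank ℂ A) :
        A = ⊤ := by
      have hmap : finrank ℂ (A.map S.toSubmodule.subtype) = finrank ℂ A :=
        Submodule.finrank_map_subtype_eq _ _
      refine Submodule.eq_top_of_finrank_eq (le_antisymm (Submodule.finrank_le _) (not_lt.mp ?_))
      rw [← hmap] at hAp ⊢
      refine hmin ⟨A.map S.toSubmodule.subtype, ?_⟩ ⟨?_, hAp⟩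
      · rintro g _ ⟨v, hv, rfl⟩
        exact ⟨_, hA g v hv, rfl⟩
      · rintro _ ⟨v, -, rfl⟩
        exact hSU v.2
    by_cases hTp : p ∣ finrank ℂ T
    · left
      have := key W hW fun h => hSp (hsum ▸ dvd_add hTp h)
      subst this
      simpa using hTW.disjoint
    · exact .inr (key T hT hTp)

omit [Finite G] [FiniteDimensional ℂ V] in
/-- The commutator subgroup acts trivially in every one-dimensional representation. -/
theorem apply_eq_of_mem_commutator (ρ : Representation ℂ G V) (h1 : finrank ℂ V = 1) {c : G}
    (hc : c ∈ commutator G) (v : V) : ρ c v = v := by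
  have hcomm (a b : End ℂ V) : a * b = b * a := by
    obtain ⟨r, hr⟩ := LinearMap.existsUnique_eq_smul_id_of_finrank_eq_one h1 a |>.exists
    rw [hr]
    ext; simp
  have hle : commutator G ≤ ρ.ker := by
    rw [commutator_eq_closure, Subgroup.closure_le]
    rintro _ ⟨a, b, rfl⟩
    rw [SetLike.mem_coe, MonoidHom.mem_ker, commutatorElement_def, map_mul, map_mul, map_mul,
      hcomm (ρ a), mul_assoc, ← map_mul ρ a⁻¹, mul_assoc, ← map_mul, ← map_mul]
    simp
  rw [MonoidHom.mem_ker.mp (hle hc)]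
  rfl

end Subreps

/-! ### Permutation representations -/

section Permutation

variable {G X : Type} [Group G] [MulAction G X]

variable (G X) in
/-- The permutation representation of `G` on complex functions on the `G`-set `X`. -/
def permRep : Representation ℂ G (X → ℂ) where
  toFun g := LinearMap.funLeft ℂ ℂ fun x => g⁻¹ • x
  map_one' := by ext; simp [LinearMap.funLeft_apply]
  map_mul' a b := by ext; simp [LinearMap.funLeft_apply, mul_smul]

theorem permRep_apply (g : G) (f : X → ℂ) (x : X) : permRep G X g f x = f (g⁻¹ • x) := rfl

/-- The constituent is found in the space of functions on `G ⧸ H` of sum zero, whose dimension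
`|G : H| - 1` is prime to `p`. No one-dimensional subrepresentation occurs in that space: the
commutator subgroup would fix it, but acts transitively on `G ⧸ H` and so fixes only constants. -/
theorem exists_irreducible_of_sup_commutator_eq_top [Finite G] (H : Subgroup G)
    (hH : H ⊔ commutator G = ⊤) {p : ℕ} (hp : p.Prime) (hdvd : p ∣ H.index) :
    ∃ S : Subrepresentation (permRep G (G ⧸ H)), S.toRepresentation.IsIrreducible ∧
      ¬ p ∣ finrank ℂ S.toSubmodule ∧ finrank ℂ S.toSubmodule ≠ 1 := by
  classical
  have := Fintype.ofFinite (G ⧸ H)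
  let s : (G ⧸ H → ℂ) →ₗ[ℂ] ℂ := ∑ x, LinearMap.proj x
  have hs (f : G ⧸ H → ℂ) : s f = ∑ x, f x := by simp [s]
  have hsurj : LinearMap.range s = ⊤ := LinearMap.range_eq_top.mpr fun z =>
    ⟨Pi.single ((1 : G) : G ⧸ H) z, by rw [hs]; simp⟩
  have hdim : finrank ℂ (LinearMap.ker s) + 1 = H.index := by
    have := LinearMap.finrank_range_add_finrank_ker s
    rw [hsurj, finrank_top, finrank_self, finrank_pi, ← Nat.card_eq_fintype_card] at this
    rw [add_comm, this, Subgroup.index]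
  obtain ⟨S, hSU, hirr, hSp⟩ := exists_irreducible_le_not_dvd_finrank (permRep G (G ⧸ H)) p
    (LinearMap.ker s) (fun g f hf => by
      rw [LinearMap.mem_ker, hs] at hf ⊢
      rw [← hf]
      exact Fintype.sum_equiv (MulAction.toPerm g⁻¹) _ _ fun x => rfl)
    (fun h => hp.one_lt.ne' (Nat.dvd_one.mp ((Nat.dvd_add_right h).mp (hdim ▸ hdvd))))
  refine ⟨S, hirr, hSp, fun h1 => ?_⟩
  have : Nontrivial S.toSubmodule := ((isIrreducible_iff_stable _).mp hirr).1
  obtain ⟨⟨f, hf⟩, hne⟩ := exists_ne (0 : S.toSubmodule)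
  have hconst (x : G ⧸ H) : f x = f ((1 : G) : G ⧸ H) := by
    obtain ⟨g, rfl⟩ := QuotientGroup.mk_surjective x
    have hg : g ∈ commutator G ⊔ H := by rw [sup_comm, hH]; trivial
    obtain ⟨c, hc, h, hh, rfl⟩ := Subgroup.mem_sup_of_normal_left.mp hg
    have hfix : permRep G (G ⧸ H) c f = f := congrArg Subtype.val
      (apply_eq_of_mem_commutator S.toRepresentation h1 hc ⟨f, hf⟩)
    have hx : ((c * h : G) : G ⧸ H) = c • ((1 : G) : G ⧸ H) := by
      rw [MulAction.Quotient.smul_coe, smul_eq_mul, mul_one]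
      exact (QuotientGroup.eq.mpr (by simpa using hh)).symm
    have := congrFun hfix ((c * h : G) : G ⧸ H)
    rw [permRep_apply, hx, inv_smul_smul] at this
    rw [hx, this]
  have hsum : ∑ x, f x = 0 := by rw [← hs]; exact hSU hf
  simp only [hconst, Finset.sum_const, Finset.card_univ, nsmul_eq_mul] at hsum
  have h0 := (mul_eq_zero.mp hsum).resolve_left (by exact_mod_cast Fintype.card_ne_zero)
  exact hne (Subtype.ext (funext fun x => (hconst x).trans h0))

end Permutation

open scoped commutatorElement in
/-- If all irreducible subrepresentations of the regular representation are linear, then `G` is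
abelian: the commutator subgroup fixes every irreducible subrepresentation, hence by complete
reducibility everything, and the regular representation is faithful. -/
theorem commute_of_finrank_eq_one {G : Type} [Group G] [Finite G]
    (h : ∀ S : Subrepresentation (permRep G G), S.toRepresentation.IsIrreducible →
      finrank ℂ S.toSubmodule = 1) (a b : G) : a * b = b * a := by
  classical
  -- the functions fixed by the commutator subgroup
  let F : Submodule ℂ (G → ℂ) :=
    { carrier := {f | ∀ c ∈ commutator G, permRep G G c f = f}
      add_mem' := fun hf hf' c hc => by rw [map_add, hf c hc, hf' c hc]
      zero_mem' := fun c _ => map_zero _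
      smul_mem' := fun r f hf c hc => by rw [map_smul, hf c hc] }
  have hF : ∀ g, ∀ f ∈ F, permRep G G g f ∈ F := fun g f hf c hc => by
    have hc' : g⁻¹ * c * g ∈ commutator G := by
      simpa using (inferInstance : (commutator G).Normal).conj_mem c hc g⁻¹
    have := congrArg (permRep G G g) (hf _ hc')
    rw [← Module.End.mul_apply, ← map_mul, mul_assoc, mul_inv_cancel_left, map_mul] at this
    exact this
  obtain ⟨W, hW, hc⟩ := exists_stable_isCompl (permRep G G) F hF
  have hbot : W = ⊥ := by
    by_contra hne
    obtain ⟨S, hSW, hirr, hS0⟩ := exists_irreducible_le_not_dvd_finrank (permRep G G) 0 W hW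
      (by rw [zero_dvd_iff]; exact fun h0 => hne (Submodule.finrank_eq_zero.mp h0))
    have hSF : S.toSubmodule ≤ F := fun f hf c hc => congrArg Subtype.val
      (apply_eq_of_mem_commutator S.toRepresentation (h S hirr) hc ⟨f, hf⟩)
    have : S.toSubmodule = ⊥ := le_bot_iff.mp (hc.disjoint hSF hSW)
    rw [this, finrank_bot] at hS0
    exact hS0 (dvd_refl 0)
  have htop : F = ⊤ := by rw [hbot] at hc; simpa using hc.codisjoint
  have hmem : (Pi.single 1 1 : G → ℂ) ∈ F := htop ▸ Submodule.mem_top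
  have h1 : ⁅a, b⁆ = 1 := by
    have hfix := hmem ⁅a, b⁆
      (Subgroup.commutator_mem_commutator (Subgroup.mem_top a) (Subgroup.mem_top b))
    have := congrFun hfix ⁅a, b⁆
    rw [permRep_apply, smul_eq_mul, inv_mul_cancel, Pi.single_eq_same] at this
    by_contra hne
    rw [Pi.single_eq_of_ne hne] at this
    exact one_ne_zero this
  exact commutatorElement_eq_one_iff_mul_comm.mp h1

/-! ### Composite degree groups -/

section CDG

/-- The CDG condition for representations as homomorphisms to `V →ₗ[ℂ] V`. As `1` is not a prime
power, no degree is a prime power. -/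
theorem IsCDG.not_isPrimePow_finrank {G : Type} [Group G] [Finite G] (hG : IsCDG G)
    {V : Type} [AddCommGroup V] [Module ℂ V] [FiniteDimensional ℂ V]
    (ρ : Representation ℂ G V) (hρ : ρ.IsIrreducible) : ¬ IsPrimePow (finrank ℂ V) := by
  have := Fintype.ofFinite G
  have : NeZero (Nat.card G : ℂ) := ⟨by exact_mod_cast Nat.card_pos.ne'⟩
  have := invertibleOfNonzero (NeZero.ne (Nat.card G : ℂ))
  -- Both forms of simplicity are equivalent to the endomorphisms being one-dimensional, and in
  -- either setting that dimension is the norm of the character.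
  have hsimple : CategoryTheory.Simple (FDRep.of ρ) := by
    rw [FDRep.simple_iff_end_is_rank_one, ← Nat.cast_inj (R := ℂ),
      ← FDRep.scalar_product_char_eq_finrank_equivariant,
      ← IsIrreducible.finrank_intertwiningMap_self ρ,
      ← card_inv_mul_sum_char_mul_char_eq_finrank]
    rfl
  intro hpp
  have h1 := hG (finrank ℂ V) ⟨FDRep.of ρ, hsimple, rfl⟩ hpp
  exact not_isPrimePow_one (h1 ▸ hpp)

/-- A quotient of prime power order of a CDG is abelian: its irreducible representations pull back
to irreducible representations of the CDG, and their degrees are powers of `p`. -/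
theorem IsCDG.commute_of_surjective {G P : Type} [Group G] [Finite G] [Group P] [Finite P]
    (hG : IsCDG G) (f : G →* P) (hf : Function.Surjective f) {p : ℕ} (hp : p.Prime)
    (hP : IsPGroup p P) (a b : P) : a * b = b * a := by
  refine commute_of_finrank_eq_one (fun S hirr => ?_) a b
  have : Fact p.Prime := ⟨hp⟩
  by_contra hne
  have hirr' : Representation.IsIrreducible
      (S.toRepresentation.comp f : Representation ℂ G _) := by
    rw [isIrreducible_iff_stable] at hirr ⊢
    refine ⟨hirr.1, fun U hU => hirr.2 U fun g => ?_⟩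
    obtain ⟨g, rfl⟩ := hf g
    exact hU g
  refine hG.not_isPrimePow_finrank _ hirr' ?_
  obtain ⟨n, hn⟩ := IsPGroup.iff_card.mp hP
  obtain ⟨k, -, hk⟩ := (Nat.dvd_prime_pow hp).mp
    (hn ▸ finrank_dvd_card_of_isIrreducible S.toRepresentation)
  rw [hk] at hne ⊢
  exact hp.isPrimePow.pow fun h0 => hne (by rw [h0, pow_zero])

theorem isPrimePow_of_dvd_of_not_dvd {n d p : ℕ} (hn : n ≠ 0) (hcard : n.primeFactors.card ≤ 2)
    (hp : p ∈ n.primeFactors) (hdn : d ∣ n) (hpd : ¬ p ∣ d) (hd1 : d ≠ 1) : IsPrimePow d := by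
  rw [isPrimePow_iff_card_primeFactors_eq_one]
  have hsub : d.primeFactors ⊆ n.primeFactors.erase p := fun r hr =>
    Finset.mem_erase.mpr ⟨fun h => hpd (h ▸ Nat.dvd_of_mem_primeFactors hr),
      Nat.primeFactors_mono hdn hn hr⟩
  have h1 := Finset.card_le_card hsub
  rw [Finset.card_erase_of_mem hp] at h1
  have h2 : d.primeFactors.card ≠ 0 := by
    rw [Finset.card_ne_zero, Nat.nonempty_primeFactors]
    have := ne_zero_of_dvd_ne_zero hn hdn
    omega
  omega

/-- The normalizer of `Q` supplements the commutator subgroup by the Frattini argument, so if it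
were proper there would be a nonlinear irreducible representation of prime power degree. -/
theorem IsCDG.sylow_normal {G : Type} [Group G] [Finite G] (hG : IsCDG G)
    (hcard : (Nat.card G).primeFactors.card ≤ 2) {q : ℕ} [hq : Fact q.Prime] (Q : Sylow q G) :
    (Q : Subgroup G).Normal := by
  by_contra hQ
  have hn : Nat.card G ≠ 0 := Nat.card_pos.ne'
  set N := Subgroup.normalizer (Q : Set G)
  have hN : N.index ≠ 1 := fun h =>
    hQ (Subgroup.normalizer_eq_top_iff.mp (Subgroup.index_eq_one.mp h))
  obtain ⟨p, hp, hpN⟩ := Nat.exists_prime_and_dvd hN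
  have hpcard : p ∈ (Nat.card G).primeFactors :=
    Nat.mem_primeFactors.mpr ⟨hp, hpN.trans N.index_dvd_card, hn⟩
  have hFrattini : N ⊔ commutator G = ⊤ := by
    have hnormal : ((Q : Subgroup G) ⊔ commutator G).Normal :=
      Subgroup.Normal.of_commutator_le _ le_sup_right
    have := Sylow.normalizer_sup_eq_top' Q (le_sup_left (b := commutator G))
    have hle : (Q : Subgroup G) ≤ N := Subgroup.le_normalizer
    rw [← sup_assoc] at this
    rwa [← sup_eq_left.mpr hle]
  obtain ⟨S, hirr, hSp, hS1⟩ := exists_irreducible_of_sup_commutator_eq_top N hFrattini hp hpN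
  exact hG.not_isPrimePow_finrank _ hirr (isPrimePow_of_dvd_of_not_dvd hn hcard hpcard
    (finrank_dvd_card_of_isIrreducible S.toRepresentation) hSp hS1)

end CDG

/-- **Lemma (Statement 11).** A finite nonabelian CDG has order divisible by at least three
distinct primes. -/
theorem three_primes_dvd_card (G : Type) [Group G] [Finite G]
    (hna : ∃ a b : G, a * b ≠ b * a) (hG : IsCDG G) :
    3 ≤ (Nat.card G).primeFactors.card := by
  by_contra! hlt
  classical
  obtain ⟨a, b, hab⟩ := hna
  have hnormal (p : ℕ) (_ : Fact p.Prime) (P : Sylow p G) : (P : Subgroup G).Normal :=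
    hG.sylow_normal (Nat.le_of_lt_succ hlt) P
  obtain ⟨e⟩ := (Group.isNilpotent_of_finite_tfae (G := G)).out 3 4 |>.mp hnormal
  refine hab (e.symm.injective ?_)
  rw [map_mul, map_mul]
  refine funext fun p => funext fun P => ?_
  have : Fact (p : ℕ).Prime := ⟨Nat.prime_of_mem_primeFactors p.2⟩
  let proj : G →* P := ((Pi.evalMonoidHom _ P).comp (Pi.evalMonoidHom _ p)).comp e.symm.toMonoidHom
  have hproj : Function.Surjective proj := fun x =>
    ⟨e (Pi.mulSingle p (Pi.mulSingle P x)), by simp [proj]⟩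
  exact hG.commute_of_surjective proj hproj this.out P.isPGroup' _ _
end
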